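/- Let q be a prime power and let ν, m₁, m₂, t be positive integers with m₁ ≥ m₂ ≥ t and 2ν ≥ 2m₁ + m₂ + 1. If ℱ₁ ⊆ 𝒫_{m₁} and ℱ₂ ⊆ 𝒫_{m₂} are cross t-intersecting families with |ℱ₁|·|ℱ₂| = N'(t;m₁;2ν)·N'(t;m₂;2ν), then there exists T ∈ 𝒫_t such that ℱᵢ = {F ∈ 𝒫_{mᵢ} : T ⊆ F} for i = 1, 2; in particular, the fixed t-dimensional totally isotropic subspace T is contained in every member of ℱ₁ and of ℱ₂. -/

import Mathlib

open Finset Module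

noncomputable section

/-- Gaussian binomial coefficient `[n choose k]_q` as a rational number. -/
def gaussBinom (q n k : ℕ) : ℚ :=
  ∏ i ∈ Finset.range k, ((q : ℚ) ^ ((n : ℤ) - i) - 1) / ((q : ℚ) ^ ((k : ℤ) - i) - 1)

/-- `N'(a; m; 2ν)`, the number of `m`-dim totally isotropic subspaces containing
a fixed `a`-dim one. -/
def Nprime (q a m ν : ℕ) : ℚ :=
  ∏ i ∈ Finset.Icc 1 (m - a), ((q : ℚ) ^ (2 * ((ν : ℤ) - m + i)) - 1) / ((q : ℚ) ^ (i : ℤ) - 1)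

variable {K V : Type*} [Field K] [AddCommGroup V] [Module K V]

/-- A subspace is totally isotropic w.r.t. the bilinear form `f`. -/
def TotallyIsotropic (f : V →ₗ[K] V →ₗ[K] K) (W : Submodule K V) : Prop :=
  ∀ x ∈ W, ∀ y ∈ W, f x y = 0

/-- `polar f m` = `𝒫_m`, the set of `m`-dimensional totally isotropic subspaces. -/
def polar (f : V →ₗ[K] V →ₗ[K] K) (m : ℕ) : Set (Submodule K V) :=
  {W | TotallyIsotropic f W ∧ finrank K W = m}

/-- `X` is a `t`-cover of the family `ℱ`. -/
def IsTCover (f : V →ₗ[K] V →ₗ[K] K) (t : ℕ) (ℱ : Set (Submodule K V))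
    (X : Submodule K V) : Prop :=
  TotallyIsotropic f X ∧ ∀ F ∈ ℱ, t ≤ finrank K ↥(X ⊓ F)

/-- `τ_t(ℱ)`, the minimum dimension of a `t`-cover of `ℱ`. -/
def tauCover (f : V →ₗ[K] V →ₗ[K] K) (t : ℕ) (ℱ : Set (Submodule K V)) : ℕ :=
  sInf {x | ∃ X, IsTCover f t ℱ X ∧ finrank K ↥X = x}

def C1 (f : V →ₗ[K] V →ₗ[K] K) (M T : Submodule K V) (m t : ℕ) : Set (Submodule K V) :=
  {F | F ∈ polar f m ∧ T ≤ F ∧ t + 1 ≤ finrank K ↥(F ⊓ M)}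

def C2 (f : V →ₗ[K] V →ₗ[K] K) (M T : Submodule K V) (m : ℕ) : Set (Submodule K V) :=
  {F | F ∈ polar f m ∧ T ≤ F} ∪ {F | F ∈ polar f m ∧ F ≤ M}

def C3 (f : V →ₗ[K] V →ₗ[K] K) (S : Submodule K V) (m : ℕ) : Set (Submodule K V) :=
  {F | F ∈ polar f m ∧ S ≤ F}

def C4 (f : V →ₗ[K] V →ₗ[K] K) (S : Submodule K V) (m t : ℕ) : Set (Submodule K V) :=
  {F | F ∈ polar f m ∧ t ≤ finrank K ↥(F ⊓ S)}

def s0 (q ν m s t : ℕ) : ℚ :=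
  gaussBinom q (s - t) 1 * Nprime q (t + 1) m ν - q * gaussBinom q (s - t) 2 * Nprime q (t + 2) m ν

/-!
Write `q` for the size of the field and `t + aᵢ` for the least dimension of a `t`-cover of `ℱᵢ`.
A member of `ℱ₁` meets a minimal cover of `ℱ₁` in dimension at least `t`; descending through
hyperplanes of that cover to a `t`-dimensional subspace of the member costs a factor `q ^ (t + 1)`
per dimension. A subspace `S` of dimension less than `t + a₂` fails to `t`-cover some `G ∈ ℱ₂`, so
every member of `ℱ₁` above `S` contains one of at most `q ^ (m₂ - t + 1)` subspaces spanned by `S`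
and a vector of `G`. Hence
`|ℱ₁| ≤ q ^ ((t + 1) a₁) * q ^ ((m₂ - t + 1) a₂) * N'(t + a₂; m₁; 2ν)`, and symmetrically for `ℱ₂`.
In the product the powers regroup as `q ^ ((m₂ + 2) a₂) * q ^ ((m₁ + 2) a₁)`, and in the given range
of dimensions `q ^ ((m₂ + 2) b) * N'(t + b; m₁; 2ν)` is strictly decreasing in `b`, as is its
counterpart with `m₁` and `m₂` exchanged. Equality therefore forces `a₁ = a₂ = 0`, so that all
members of `ℱ₁` contain a common `t`-dimensional `T`; a `G ∈ ℱ₂` not containing `T` would allow one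
more extension step and make `ℱ₁` too small.
-/

section DoubleCounting

theorem ncard_mul_le_ncard_mul {α β : Type*} {s : Set α} {u : Set β} (hs : s.Finite)
    (hu : u.Finite) (r : α → β → Prop) {m n : ℚ} (hm : ∀ a ∈ s, m ≤ {b ∈ u | r a b}.ncard)
    (hn : ∀ b ∈ u, {a ∈ s | r a b}.ncard ≤ n) : s.ncard * m ≤ u.ncard * n := by
  classical
  lift s to Finset α using hs
  lift u to Finset β using hu
  simp only [Finset.mem_coe, ← Finset.coe_filter, Set.ncard_coe_finset] at hm hn ⊢
  simpa only [nsmul_eq_mul] using Finset.card_nsmul_le_card_nsmul r hm hn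

theorem ncard_le_ncard_mul_of_forall_exists {α β : Type*} {s : Set α} {u : Set β}
    (hs : s.Finite) (hu : u.Finite) (r : α → β → Prop) {n : ℚ} (hr : ∀ a ∈ s, ∃ b ∈ u, r a b)
    (hn : ∀ b ∈ u, {a ∈ s | r a b}.ncard ≤ n) : s.ncard ≤ u.ncard * n := by
  rw [← mul_one (s.ncard : ℚ)]
  refine ncard_mul_le_ncard_mul hs hu r (fun a ha => ?_) hn
  exact_mod_cast (Set.ncard_pos (hu.subset (Set.sep_subset _ _))).2 (hr a ha)

end DoubleCounting

section Subspaces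

theorem exists_le_finrank_eq {W : Submodule K V} {k : ℕ} (hk : k ≤ finrank K W) :
    ∃ U ≤ W, finrank K U = k := by
  obtain ⟨s, hs, hli⟩ := exists_finset_linearIndependent_of_le_finrank hk
  refine ⟨(Submodule.span K (s : Set W)).map W.subtype, Submodule.map_subtype_le _ _, ?_⟩
  rw [Submodule.finrank_map_subtype_eq, finrank_span_finset_eq_card hli, hs]

variable [FiniteDimensional K V]

theorem exists_le_disjoint_finrank_eq {S G : Submodule K V} {k : ℕ}
    (hk : k + finrank K ↥(S ⊓ G) ≤ finrank K G) :
    ∃ W ≤ G, Disjoint S W ∧ finrank K W = k := by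
  obtain ⟨C, hC⟩ := Submodule.exists_isCompl (S ⊓ G)
  have hCG : k ≤ finrank K ↥(C ⊓ G) := by
    have h_sup_inf := Submodule.finrank_sup_add_finrank_inf_eq C G
    have h_compl := Submodule.finrank_add_eq_of_isCompl hC
    have h_sup := Submodule.finrank_le (C ⊔ G)
    omega
  obtain ⟨W, hW, hWk⟩ := exists_le_finrank_eq hCG
  refine ⟨W, hW.trans inf_le_right, Disjoint.mono_right hW ?_, hWk⟩
  rw [disjoint_iff, inf_comm C, ← inf_assoc, hC.inf_eq_bot]

theorem exists_mem_mem_ne_zero_of_finrank_lt {A W G : Submodule K V} (hA : A ≤ G) (hW : W ≤ G)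
    (h : finrank K G < finrank K A + finrank K W) : ∃ w ∈ A, w ∈ W ∧ w ≠ 0 := by
  have h_sup_inf := Submodule.finrank_sup_add_finrank_inf_eq A W
  have h_sup := Submodule.finrank_mono (sup_le hA hW)
  have h_inf : A ⊓ W ≠ ⊥ := Submodule.one_le_finrank_iff.1 (by omega)
  obtain ⟨w, hw, hw0⟩ := Submodule.exists_mem_ne_zero_of_ne_bot h_inf
  exact ⟨w, hw.1, hw.2, hw0⟩

theorem le_of_finrank_le_finrank_inf {X F : Submodule K V}
    (h : finrank K X ≤ finrank K ↥(X ⊓ F)) : X ≤ F :=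
  inf_eq_left.1 (Submodule.eq_of_le_of_finrank_le inf_le_left h)

theorem finrank_inf_ker_add_one {X : Submodule K V} {ψ : Dual K V}
    (hψ : ψ ∉ X.dualAnnihilator) : finrank K ↥(X ⊓ LinearMap.ker ψ) + 1 = finrank K X := by
  have h_ne : ψ.domRestrict X ≠ 0 := fun h =>
    hψ ((Submodule.mem_dualAnnihilator ψ).2 fun x hx => LinearMap.congr_fun h ⟨x, hx⟩)
  rw [← Module.Dual.finrank_ker_add_one_of_ne_zero h_ne, ← Submodule.map_comap_subtype,
    Submodule.finrank_map_subtype_eq]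
  rfl

end Subspaces

section FiniteSubspaces

variable [Finite V]

theorem ncard_submodule (W : Submodule K V) : (W : Set V).ncard = Nat.card K ^ finrank K W :=
  Module.natCard_eq_pow_finrank (V := W)

theorem ncard_submodule_sdiff {S F : Submodule K V} (h : S ≤ F) :
    (((F : Set V) \ S).ncard : ℚ) = (Nat.card K : ℚ) ^ finrank K F - Nat.card K ^ finrank K S := by
  rw [Set.cast_ncard_sdiff h (Set.toFinite _), ncard_submodule, ncard_submodule]
  push_cast
  rfl

theorem exists_covering_extensions {S G : Submodule K V} {t : ℕ} (hSG : finrank K ↥(S ⊓ G) < t)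
    (htG : t ≤ finrank K G) :
    ∃ 𝓢 : Set (Submodule K V), 𝓢.ncard ≤ Nat.card K ^ (finrank K G - t + 1) ∧
      (∀ S' ∈ 𝓢, finrank K S' = finrank K S + 1) ∧
      ∀ F, S ≤ F → t ≤ finrank K ↥(F ⊓ G) → ∃ S' ∈ 𝓢, S' ≤ F := by
  obtain ⟨W, hWG, hSW, hW⟩ :=
    exists_le_disjoint_finrank_eq (S := S) (G := G) (k := finrank K G - t + 1) (by omega)
  refine ⟨(fun w => S ⊔ Submodule.span K {w}) '' ((W : Set V) \ {0}), ?_, ?_, fun F hSF hF => ?_⟩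
  · rw [← hW, ← ncard_submodule]
    exact (Set.ncard_image_le (Set.toFinite _)).trans
      (Set.ncard_le_ncard Set.sdiff_subset (Set.toFinite _))
  · rintro _ ⟨w, ⟨hw, hw0⟩, rfl⟩
    exact Submodule.finrank_sup_span_singleton fun hwS =>
      hw0 (Submodule.disjoint_def.1 hSW w hwS hw)
  · obtain ⟨w, hwF, hwW, hw0⟩ := exists_mem_mem_ne_zero_of_finrank_lt
      (inf_le_right : F ⊓ G ≤ G) hWG (by omega)
    exact ⟨_, ⟨w, ⟨hwW, hw0⟩, rfl⟩,
      sup_le hSF ((Submodule.span_singleton_le_iff_mem w F).2 hwF.1)⟩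

theorem exists_covering_hyperplanes [Finite K] {X : Submodule K V} {t : ℕ} (htX : t < finrank K X) :
    ∃ 𝓗 : Set (Submodule K V), 𝓗.ncard ≤ Nat.card K ^ (t + 1) ∧
      (∀ H ∈ 𝓗, finrank K H + 1 = finrank K X) ∧
      ∀ F, t ≤ finrank K ↥(X ⊓ F) → ∃ H ∈ 𝓗, t ≤ finrank K ↥(H ⊓ F) := by
  have : Finite (Dual K V) := Module.finite_of_finite K
  have hX := Subspace.finrank_add_finrank_dualAnnihilator_eq X
  have hdual : finrank K (⊤ : Submodule K (Dual K V)) = finrank K V := by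
    rw [finrank_top, Subspace.dual_finrank_eq]
  obtain ⟨D, -, hXD, hD⟩ := exists_le_disjoint_finrank_eq (S := X.dualAnnihilator) (G := ⊤)
    (k := t + 1) (by rw [inf_top_eq]; omega)
  refine ⟨(fun ψ => X ⊓ LinearMap.ker ψ) '' ((D : Set (Dual K V)) \ {0}), ?_, ?_, fun F hF => ?_⟩
  · rw [← hD, ← ncard_submodule]
    exact (Set.ncard_image_le (Set.toFinite _)).trans
      (Set.ncard_le_ncard Set.sdiff_subset (Set.toFinite _))
  · rintro _ ⟨ψ, ⟨hψ, hψ0⟩, rfl⟩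
    exact finrank_inf_ker_add_one fun hψX => hψ0 (Submodule.disjoint_def.1 hXD ψ hψX hψ)
  · obtain ⟨T, hT, rfl⟩ := exists_le_finrank_eq hF
    have hTann := Subspace.finrank_add_finrank_dualAnnihilator_eq T
    obtain ⟨ψ, hψT, hψD, hψ0⟩ := exists_mem_mem_ne_zero_of_finrank_lt
      (le_top : T.dualAnnihilator ≤ ⊤) (le_top : D ≤ ⊤) (by omega)
    have hTψ : T ≤ LinearMap.ker ψ := fun x hx =>
      (Submodule.mem_dualAnnihilator ψ).1 hψT x hx
    exact ⟨_, ⟨ψ, ⟨hψD, hψ0⟩, rfl⟩, Submodule.finrank_mono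
      (le_inf (le_inf (hT.trans inf_le_left) hTψ) (hT.trans inf_le_right))⟩

theorem ncard_le_pow_mul_of_forall_extension {S G : Submodule K V} {t : ℕ}
    {𝓐 : Set (Submodule K V)} {B : ℚ} (hSG : finrank K ↥(S ⊓ G) < t) (htG : t ≤ finrank K G)
    (hS : ∀ F ∈ 𝓐, S ≤ F) (hG : ∀ F ∈ 𝓐, t ≤ finrank K ↥(F ⊓ G)) (hB0 : 0 ≤ B)
    (hB : ∀ S' : Submodule K V, finrank K S' = finrank K S + 1 → {F ∈ 𝓐 | S' ≤ F}.ncard ≤ B) :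
    𝓐.ncard ≤ (Nat.card K : ℚ) ^ (finrank K G - t + 1) * B := by
  obtain ⟨𝓢, h𝓢, hdim, hcov⟩ := exists_covering_extensions hSG htG
  calc (𝓐.ncard : ℚ) ≤ 𝓢.ncard * B :=
        ncard_le_ncard_mul_of_forall_exists (Set.toFinite _) (Set.toFinite _)
          (fun F S' => S' ≤ F) (fun F hF => hcov F (hS F hF) (hG F hF))
          fun S' hS' => hB S' (hdim S' hS')
    _ ≤ _ := mul_le_mul_of_nonneg_right (by exact_mod_cast h𝓢) hB0

theorem ncard_meeting_le_pow_mul [Finite K] {t : ℕ} {𝓐 : Set (Submodule K V)} {B : ℚ}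
    (hB0 : 0 ≤ B) (hB : ∀ T : Submodule K V, finrank K T = t → {F ∈ 𝓐 | T ≤ F}.ncard ≤ B) (a : ℕ)
    {X : Submodule K V} (hX : finrank K X = t + a) :
    {F ∈ 𝓐 | t ≤ finrank K ↥(X ⊓ F)}.ncard ≤ ((Nat.card K : ℚ) ^ (t + 1)) ^ a * B := by
  induction a generalizing X with
  | zero =>
    have hsub : {F ∈ 𝓐 | t ≤ finrank K ↥(X ⊓ F)} ⊆ {F ∈ 𝓐 | X ≤ F} := fun F hF =>
      ⟨hF.1, le_of_finrank_le_finrank_inf (hX.le.trans hF.2)⟩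
    rw [pow_zero, one_mul]
    exact le_trans (by exact_mod_cast Set.ncard_le_ncard hsub) (hB X hX)
  | succ a ih =>
    obtain ⟨𝓗, h𝓗, hdim, hcov⟩ := exists_covering_hyperplanes (X := X) (t := t) (by omega)
    calc ({F ∈ 𝓐 | t ≤ finrank K ↥(X ⊓ F)}.ncard : ℚ)
        ≤ 𝓗.ncard * (((Nat.card K : ℚ) ^ (t + 1)) ^ a * B) := by
          refine ncard_le_ncard_mul_of_forall_exists (Set.toFinite _) (Set.toFinite _)
            (fun F (H : Submodule K V) => t ≤ finrank K ↥(H ⊓ F)) (fun F hF => hcov F hF.2)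
            fun H hH => ?_
          refine le_trans ?_ (ih (X := H) (by have := hdim H hH; omega))
          have hsub : {F ∈ {F ∈ 𝓐 | t ≤ finrank K ↥(X ⊓ F)} | t ≤ finrank K ↥(H ⊓ F)} ⊆
              {F ∈ 𝓐 | t ≤ finrank K ↥(H ⊓ F)} := fun F hF => ⟨hF.1.1, hF.2⟩
          exact_mod_cast Set.ncard_le_ncard hsub
      _ ≤ (Nat.card K : ℚ) ^ (t + 1) * (((Nat.card K : ℚ) ^ (t + 1)) ^ a * B) :=
          mul_le_mul_of_nonneg_right (by exact_mod_cast h𝓗) (by positivity)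
      _ = ((Nat.card K : ℚ) ^ (t + 1)) ^ (a + 1) * B := by ring

theorem ncard_mul_le_of_forall_mem {S P : Submodule K V} {m : ℕ} {𝓐 : Set (Submodule K V)} {B : ℚ}
    (hSP : S ≤ P) (h𝓐 : ∀ F ∈ 𝓐, S ≤ F ∧ F ≤ P ∧ finrank K F = m)
    (hB : ∀ w ∉ S, {F ∈ 𝓐 | w ∈ F}.ncard ≤ B) :
    𝓐.ncard * ((Nat.card K : ℚ) ^ m - Nat.card K ^ finrank K S) ≤
      ((Nat.card K : ℚ) ^ finrank K P - Nat.card K ^ finrank K S) * B := by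
  rw [← ncard_submodule_sdiff hSP]
  refine ncard_mul_le_ncard_mul (Set.toFinite _) (Set.toFinite _) (fun F w => w ∈ F)
    (fun F hF => ?_) fun w hw => hB w hw.2
  obtain ⟨hSF, hFP, rfl⟩ := h𝓐 F hF
  rw [← ncard_submodule_sdiff hSF]
  have hsub : (F : Set V) \ S ⊆ {w ∈ (P : Set V) \ S | w ∈ F} := fun w hw =>
    ⟨⟨hFP hw.1, hw.2⟩, hw.1⟩
  exact_mod_cast Set.ncard_le_ncard hsub

end FiniteSubspaces

section Nprime

variable {q a m ν e : ℕ}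

theorem Nprime_pos (hq : 1 < q) (hm : m ≤ ν) : 0 < Nprime q a m ν := by
  have hq' : (1 : ℚ) < q := by exact_mod_cast hq
  refine Finset.prod_pos fun i hi => ?_
  rw [Finset.mem_Icc] at hi
  exact div_pos (sub_pos.2 (one_lt_zpow₀ hq' (by omega))) (sub_pos.2 (one_lt_zpow₀ hq' (by omega)))

theorem Nprime_self : Nprime q m m ν = 1 := by simp [Nprime]

theorem Nprime_eq_div_mul_Nprime_succ (ham : a < m) (hm : m ≤ ν) :
    Nprime q a m ν =
      ((q : ℚ) ^ (2 * (ν - a)) - 1) / ((q : ℚ) ^ (m - a) - 1) * Nprime q (a + 1) m ν := by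
  have h : m - a = m - (a + 1) + 1 := by omega
  rw [Nprime, Nprime, h, Finset.prod_Icc_succ_top (by omega), mul_comm]
  congr 3
  rw [← zpow_natCast]
  congr 1
  push_cast [show a ≤ ν by omega, show a + 1 ≤ m by omega]
  ring

theorem pow_mul_Nprime_succ_lt (hq : 1 < q) (ham : a < m) (hm : m ≤ ν)
    (he : e + m + a ≤ 2 * ν) : (q : ℚ) ^ e * Nprime q (a + 1) m ν < Nprime q a m ν := by
  have hq' : (1 : ℚ) < q := by exact_mod_cast hq
  have hden : (1 : ℚ) < (q : ℚ) ^ (m - a) := one_lt_pow₀ hq' (by omega)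
  rw [Nprime_eq_div_mul_Nprime_succ ham hm]
  refine mul_lt_mul_of_pos_right ?_ (Nprime_pos hq hm)
  rw [lt_div_iff₀ (sub_pos.2 hden)]
  rcases Nat.eq_zero_or_pos e with rfl | he0
  · have : (q : ℚ) ^ (m - a) < (q : ℚ) ^ (2 * (ν - a)) := pow_lt_pow_right₀ hq' (by omega)
    linarith
  · have hqe : (1 : ℚ) < (q : ℚ) ^ e := one_lt_pow₀ hq' (by omega)
    have hpow : (q : ℚ) ^ e * (q : ℚ) ^ (m - a) ≤ (q : ℚ) ^ (2 * (ν - a)) := by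
      rw [← pow_add]
      exact pow_le_pow_right₀ hq'.le (by omega)
    linarith

theorem strictAntiOn_pow_mul_Nprime (hq : 1 < q) (he : e + 2 * m ≤ 2 * ν + 1) (t : ℕ) :
    StrictAntiOn (fun b => ((q : ℚ) ^ e) ^ b * Nprime q (t + b) m ν) {b | t + b ≤ m} := by
  have hconn : {b | t + b ≤ m}.OrdConnected :=
    ⟨fun _ _ _ hy _ hz => (Nat.add_le_add_left hz.2 t).trans hy⟩
  refine strictAntiOn_of_add_one_lt hconn fun b _ _ hb => ?_
  have hb' : t + (b + 1) ≤ m := hb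
  rw [pow_succ, mul_assoc, ← add_assoc]
  exact mul_lt_mul_of_pos_left
    (pow_mul_Nprime_succ_lt hq (by omega) (by omega) (by omega)) (by positivity)

end Nprime

section Isotropic

variable {f : V →ₗ[K] V →ₗ[K] K}

theorem TotallyIsotropic.mono {S F : Submodule K V} (hF : TotallyIsotropic f F) (h : S ≤ F) :
    TotallyIsotropic f S :=
  fun x hx y hy => hF x (h hx) y (h hy)

theorem finrank_add_finrank_dualCoannihilator_map [FiniteDimensional K V] (hf : f.SeparatingLeft)
    (S : Submodule K V) :
    finrank K S + finrank K (S.map f).dualCoannihilator = finrank K V := by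
  have hinj : Function.Injective f :=
    LinearMap.ker_eq_bot.1 (LinearMap.separatingLeft_iff_ker_eq_bot.1 hf)
  rw [← Subspace.finrank_add_finrank_dualCoannihilator_eq (S.map f),
    (Submodule.equivMapOfInjective f hinj S).finrank_eq]

theorem TotallyIsotropic.le_dualCoannihilator_map {S F : Submodule K V}
    (hF : TotallyIsotropic f F) (h : S ≤ F) : F ≤ (S.map f).dualCoannihilator := by
  rintro y hy
  rw [Submodule.mem_dualCoannihilator]
  rintro _ ⟨x, hx, rfl⟩
  exact hF x (h hx) y hy

variable [Finite K] [Finite V] {ν m : ℕ}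

theorem ncard_C3_le_div_mul (hf : f.SeparatingLeft) (hV : finrank K V = 2 * ν) (hm : m ≤ ν)
    {S : Submodule K V} {a : ℕ} (hS : TotallyIsotropic f S) (ha : finrank K S = a) (ham : a < m)
    {B : ℚ} (hB : ∀ w ∉ S, (C3 f (S ⊔ Submodule.span K {w}) m).ncard ≤ B) :
    (C3 f S m).ncard ≤
      ((Nat.card K : ℚ) ^ (2 * (ν - a)) - 1) / ((Nat.card K : ℚ) ^ (m - a) - 1) * B := by
  have hq : (1 : ℚ) < Nat.card K := by exact_mod_cast Finite.one_lt_card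
  have hperp := finrank_add_finrank_dualCoannihilator_map hf S
  have hcount := ncard_mul_le_of_forall_mem (𝓐 := C3 f S m) (m := m) (B := B)
    (hS.le_dualCoannihilator_map le_rfl)
    (fun F hF => ⟨hF.2, hF.1.1.le_dualCoannihilator_map hF.2, hF.1.2⟩) fun w hw => by
      have hsub : {F ∈ C3 f S m | w ∈ F} ⊆ C3 f (S ⊔ Submodule.span K {w}) m := fun F hF =>
        ⟨hF.1.1, sup_le hF.1.2 ((Submodule.span_singleton_le_iff_mem w F).2 hF.2)⟩
      exact le_trans (by exact_mod_cast Set.ncard_le_ncard hsub) (hB w hw)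
  rw [ha, show finrank K (S.map f).dualCoannihilator = a + 2 * (ν - a) by omega,
    ← pow_mul_pow_sub _ ham.le, pow_add, ← mul_sub_one, ← mul_sub_one, mul_left_comm, mul_assoc]
    at hcount
  rw [div_mul_eq_mul_div, le_div_iff₀ (sub_pos.2 (one_lt_pow₀ hq (by omega)))]
  exact le_of_mul_le_mul_left hcount (by positivity)

theorem ncard_C3_le_Nprime (hf : f.SeparatingLeft) (hV : finrank K V = 2 * ν) (hm : m ≤ ν)
    {S : Submodule K V} {a : ℕ} (ha : finrank K S = a) (ham : a ≤ m) :
    (C3 f S m).ncard ≤ Nprime (Nat.card K) a m ν := by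
  induction ham using Nat.decreasingInduction generalizing S with
  | self =>
    have hsub : C3 f S m ⊆ {S} := fun F hF =>
      (Submodule.eq_of_le_of_finrank_le hF.2 (hF.1.2.trans ha.symm).le).symm
    rw [Nprime_self]
    exact_mod_cast (Set.ncard_le_ncard hsub).trans_eq (Set.ncard_singleton S)
  | of_succ a ham ih =>
    rcases (C3 f S m).eq_empty_or_nonempty with hempty | ⟨F, hF⟩
    · rw [hempty, Set.ncard_empty, Nat.cast_zero]
      exact (Nprime_pos Finite.one_lt_card hm).le
    · rw [Nprime_eq_div_mul_Nprime_succ ham hm]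
      exact ncard_C3_le_div_mul hf hV hm (hF.1.1.mono hF.2) ha ham fun w hw =>
        ih ((Submodule.finrank_sup_span_singleton hw).trans (by rw [ha]))

theorem ncard_containing_le_Nprime (hf : f.SeparatingLeft) (hV : finrank K V = 2 * ν) (hm : m ≤ ν)
    {𝓐 : Set (Submodule K V)} (h𝓐 : 𝓐 ⊆ polar f m) {S : Submodule K V} {a : ℕ}
    (ha : finrank K S = a) (ham : a ≤ m) :
    {F ∈ 𝓐 | S ≤ F}.ncard ≤ Nprime (Nat.card K) a m ν := by
  have hsub : {F ∈ 𝓐 | S ≤ F} ⊆ C3 f S m := fun F hF => ⟨h𝓐 hF.1, hF.2⟩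
  exact le_trans (by exact_mod_cast Set.ncard_le_ncard hsub) (ncard_C3_le_Nprime hf hV hm ha ham)

theorem eq_C3_of_ncard_eq_Nprime (hf : f.SeparatingLeft) (hV : finrank K V = 2 * ν) (hm : m ≤ ν)
    {𝓐 : Set (Submodule K V)} (h𝓐 : 𝓐 ⊆ polar f m) {T : Submodule K V} {t : ℕ}
    (ht : finrank K T = t) (htm : t ≤ m) (hT : ∀ F ∈ 𝓐, T ≤ F)
    (hcard : (𝓐.ncard : ℚ) = Nprime (Nat.card K) t m ν) : 𝓐 = C3 f T m := by
  refine Set.eq_of_subset_of_ncard_le (fun F hF => ⟨h𝓐 hF, hT F hF⟩) ?_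
  exact_mod_cast hcard ▸ ncard_C3_le_Nprime hf hV hm ht htm

end Isotropic

section Covers

variable {f : V →ₗ[K] V →ₗ[K] K} {t : ℕ} {𝓐 𝓑 : Set (Submodule K V)}

/-- Two families are cross `t`-intersecting. Dimensions and isotropy of the members are left to
separate hypotheses, which makes the relation symmetric. -/
def CrossIntersecting (t : ℕ) (𝓐 𝓑 : Set (Submodule K V)) : Prop :=
  ∀ F ∈ 𝓐, ∀ G ∈ 𝓑, t ≤ finrank K ↥(F ⊓ G)

theorem CrossIntersecting.symm (h : CrossIntersecting t 𝓐 𝓑) : CrossIntersecting t 𝓑 𝓐 :=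
  fun G hG F hF => inf_comm F G ▸ h F hF G hG

theorem CrossIntersecting.isTCover (h : CrossIntersecting t 𝓐 𝓑) {G : Submodule K V} (hG : G ∈ 𝓑)
    (hGf : TotallyIsotropic f G) : IsTCover f t 𝓐 G :=
  ⟨hGf, h.symm G hG⟩

theorem tauCover_le {X : Submodule K V} (hX : IsTCover f t 𝓐 X) :
    tauCover f t 𝓐 ≤ finrank K X :=
  Nat.sInf_le ⟨X, hX, rfl⟩

theorem IsTCover.exists_finrank_eq_tauCover {X : Submodule K V} (hX : IsTCover f t 𝓐 X) :
    ∃ Y, IsTCover f t 𝓐 Y ∧ finrank K Y = tauCover f t 𝓐 :=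
  Nat.sInf_mem (s := {x | ∃ Y, IsTCover f t 𝓐 Y ∧ finrank K ↥Y = x}) ⟨_, X, hX, rfl⟩

theorem IsTCover.le_tauCover [FiniteDimensional K V] {X : Submodule K V} (hX : IsTCover f t 𝓐 X)
    (h𝓐 : 𝓐.Nonempty) : t ≤ tauCover f t 𝓐 := by
  obtain ⟨Y, hY, hYτ⟩ := hX.exists_finrank_eq_tauCover
  obtain ⟨F, hF⟩ := h𝓐
  exact hYτ ▸ (hY.2 F hF).trans (Submodule.finrank_mono inf_le_left)

theorem CrossIntersecting.tauCover_mem_Icc [FiniteDimensional K V]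
    (h : CrossIntersecting t 𝓐 𝓑) {m : ℕ} (h𝓑 : 𝓑 ⊆ polar f m) (hne𝓐 : 𝓐.Nonempty)
    (hne𝓑 : 𝓑.Nonempty) : tauCover f t 𝓐 ∈ Set.Icc t m := by
  obtain ⟨G, hG⟩ := hne𝓑
  have hcover := h.isTCover hG (h𝓑 hG).1
  exact ⟨hcover.le_tauCover hne𝓐, (tauCover_le hcover).trans_eq (h𝓑 hG).2⟩

theorem exists_finrank_inf_lt_of_finrank_lt_tauCover {S : Submodule K V}
    (hS : TotallyIsotropic f S) (hlt : finrank K S < tauCover f t 𝓑) :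
    ∃ G ∈ 𝓑, finrank K ↥(S ⊓ G) < t := by
  by_contra! hcover
  exact hlt.not_ge (tauCover_le ⟨hS, hcover⟩)

theorem ncard_containing_le_pow_mul [Finite V] (hcross : CrossIntersecting t 𝓐 𝓑)
    (h𝓐 : ∀ F ∈ 𝓐, TotallyIsotropic f F) {m : ℕ} (h𝓑 : ∀ G ∈ 𝓑, finrank K G = m) (htm : t ≤ m)
    {B : ℚ} (hB0 : 0 ≤ B)
    (hB : ∀ S : Submodule K V, finrank K S = tauCover f t 𝓑 → {F ∈ 𝓐 | S ≤ F}.ncard ≤ B) (k : ℕ)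
    {S : Submodule K V} (hS : finrank K S + k = tauCover f t 𝓑) :
    {F ∈ 𝓐 | S ≤ F}.ncard ≤ ((Nat.card K : ℚ) ^ (m - t + 1)) ^ k * B := by
  induction k generalizing S with
  | zero => simpa only [pow_zero, one_mul] using hB S hS
  | succ k ih =>
    rcases {F ∈ 𝓐 | S ≤ F}.eq_empty_or_nonempty with hempty | ⟨F₀, hF₀, hSF₀⟩
    · rw [hempty, Set.ncard_empty, Nat.cast_zero]
      positivity
    obtain ⟨G, hG, hSG⟩ :=
      exists_finrank_inf_lt_of_finrank_lt_tauCover (t := t) (𝓑 := 𝓑) ((h𝓐 F₀ hF₀).mono hSF₀)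
        (by omega)
    rw [pow_succ', mul_assoc, ← h𝓑 G hG]
    refine ncard_le_pow_mul_of_forall_extension hSG (htm.trans_eq (h𝓑 G hG).symm)
      (fun F hF => hF.2) (fun F hF => hcross F hF.1 G hG) (by positivity) fun S' hS' => ?_
    have hsub : {F ∈ {F ∈ 𝓐 | S ≤ F} | S' ≤ F} ⊆ {F ∈ 𝓐 | S' ≤ F} := fun F hF =>
      ⟨hF.1.1, hF.2⟩
    rw [h𝓑 G hG]
    exact le_trans (by exact_mod_cast Set.ncard_le_ncard hsub) (ih (by omega))

end Covers

section ExtremalFamilies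

variable [Finite K] [Finite V] {f : V →ₗ[K] V →ₗ[K] K} {ν m₁ m₂ t : ℕ}
  {ℱ₁ ℱ₂ : Set (Submodule K V)}

theorem ncard_le_of_tauCover_eq (hf : f.SeparatingLeft) (hV : finrank K V = 2 * ν)
    (hm₁ : m₁ ≤ ν) (h₁ : ℱ₁ ⊆ polar f m₁) (h₂ : ℱ₂ ⊆ polar f m₂)
    (hcross : CrossIntersecting t ℱ₁ ℱ₂) (hne₁ : ℱ₁.Nonempty) (hne₂ : ℱ₂.Nonempty) {a b : ℕ}
    (ha : tauCover f t ℱ₁ = t + a) (hb : tauCover f t ℱ₂ = t + b) :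
    ℱ₁.ncard ≤ ((Nat.card K : ℚ) ^ (t + 1)) ^ a *
      (((Nat.card K : ℚ) ^ (m₂ - t + 1)) ^ b * Nprime (Nat.card K) (t + b) m₁ ν) := by
  obtain ⟨htτ₁, hτ₁⟩ := hcross.tauCover_mem_Icc h₂ hne₁ hne₂
  obtain ⟨-, hτ₂⟩ := hcross.symm.tauCover_mem_Icc h₁ hne₂ hne₁
  have hN := (Nprime_pos (a := t + b) (Finite.one_lt_card (α := K)) hm₁).le
  have hcontaining (T : Submodule K V) (hT : finrank K T = t) : {F ∈ ℱ₁ | T ≤ F}.ncard ≤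
      ((Nat.card K : ℚ) ^ (m₂ - t + 1)) ^ b * Nprime (Nat.card K) (t + b) m₁ ν :=
    ncard_containing_le_pow_mul hcross (fun F hF => (h₁ hF).1) (fun G hG => (h₂ hG).2)
      (htτ₁.trans hτ₁) hN
      (fun S hS => ncard_containing_le_Nprime hf hV hm₁ h₁ (hS.trans hb) (hb ▸ hτ₂)) b
      (by rw [hT, hb])
  obtain ⟨G, hG⟩ := hne₂
  obtain ⟨X, hX, hXτ⟩ := (hcross.isTCover hG (h₂ hG).1).exists_finrank_eq_tauCover
  have hmeet := ncard_meeting_le_pow_mul (by positivity) hcontaining a (hXτ.trans ha)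
  rwa [Set.sep_eq_self_iff_mem_true.2 hX.2] at hmeet

theorem ncard_mul_ncard_le_of_tauCover_eq (hf : f.SeparatingLeft) (hV : finrank K V = 2 * ν)
    (hm₁ : m₁ ≤ ν) (hm₂ : m₂ ≤ ν) (h₁ : ℱ₁ ⊆ polar f m₁) (h₂ : ℱ₂ ⊆ polar f m₂)
    (hcross : CrossIntersecting t ℱ₁ ℱ₂) (hne₁ : ℱ₁.Nonempty) (hne₂ : ℱ₂.Nonempty) {a b : ℕ}
    (ha : tauCover f t ℱ₁ = t + a) (hb : tauCover f t ℱ₂ = t + b) :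
    (ℱ₁.ncard : ℚ) * ℱ₂.ncard ≤
      (((Nat.card K : ℚ) ^ (m₂ + 2)) ^ b * Nprime (Nat.card K) (t + b) m₁ ν) *
      (((Nat.card K : ℚ) ^ (m₁ + 2)) ^ a * Nprime (Nat.card K) (t + a) m₂ ν) := by
  obtain ⟨-, hτ₁⟩ := hcross.tauCover_mem_Icc h₂ hne₁ hne₂
  obtain ⟨-, hτ₂⟩ := hcross.symm.tauCover_mem_Icc h₁ hne₂ hne₁
  have hN := (Nprime_pos (a := t + b) (Finite.one_lt_card (α := K)) hm₁).le
  refine (mul_le_mul (ncard_le_of_tauCover_eq hf hV hm₁ h₁ h₂ hcross hne₁ hne₂ ha hb)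
    (ncard_le_of_tauCover_eq hf hV hm₂ h₂ h₁ hcross.symm hne₂ hne₁ hb ha)
    (by positivity) (by positivity)).trans_eq ?_
  rw [show m₂ + 2 = (t + 1) + (m₂ - t + 1) by omega,
    show m₁ + 2 = (t + 1) + (m₁ - t + 1) by omega, pow_add _ (t + 1), pow_add _ (t + 1),
    mul_pow, mul_pow]
  ring

theorem tauCover_eq_of_ncard_mul_ncard_eq (hf : f.SeparatingLeft) (hV : finrank K V = 2 * ν)
    (hdim₁ : 2 * m₁ + m₂ + 1 ≤ 2 * ν) (hdim₂ : m₁ + 2 * m₂ + 1 ≤ 2 * ν)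
    (h₁ : ℱ₁ ⊆ polar f m₁) (h₂ : ℱ₂ ⊆ polar f m₂)
    (hcross : CrossIntersecting t ℱ₁ ℱ₂) (hne₁ : ℱ₁.Nonempty) (hne₂ : ℱ₂.Nonempty)
    (heq : (ℱ₁.ncard : ℚ) * ℱ₂.ncard =
      Nprime (Nat.card K) t m₁ ν * Nprime (Nat.card K) t m₂ ν) :
    tauCover f t ℱ₁ = t ∧ tauCover f t ℱ₂ = t := by
  have hq : 1 < Nat.card K := Finite.one_lt_card
  obtain ⟨htτ₁, hτ₁⟩ := hcross.tauCover_mem_Icc h₂ hne₁ hne₂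
  obtain ⟨htτ₂, hτ₂⟩ := hcross.symm.tauCover_mem_Icc h₁ hne₂ hne₁
  obtain ⟨a, ha⟩ := Nat.exists_eq_add_of_le htτ₁
  obtain ⟨b, hb⟩ := Nat.exists_eq_add_of_le htτ₂
  have hprod := ncard_mul_ncard_le_of_tauCover_eq hf hV (by omega) (by omega) h₁ h₂ hcross
    hne₁ hne₂ ha hb
  set g₁ : ℕ → ℚ := fun c =>
    ((Nat.card K : ℚ) ^ (m₂ + 2)) ^ c * Nprime (Nat.card K) (t + c) m₁ ν with hg₁
  set g₂ : ℕ → ℚ := fun c =>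
    ((Nat.card K : ℚ) ^ (m₁ + 2)) ^ c * Nprime (Nat.card K) (t + c) m₂ ν with hg₂
  have hanti₁ : StrictAntiOn g₁ {c | t + c ≤ m₁} := strictAntiOn_pow_mul_Nprime hq (by omega) t
  have hanti₂ : StrictAntiOn g₂ {c | t + c ≤ m₂} := strictAntiOn_pow_mul_Nprime hq (by omega) t
  have hbm : b ∈ {c | t + c ≤ m₁} := hb.symm.trans_le hτ₂
  have ham : a ∈ {c | t + c ≤ m₂} := ha.symm.trans_le hτ₁
  have h0m₁ : 0 ∈ {c | t + c ≤ m₁} := htτ₂.trans hτ₂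
  have h0m₂ : 0 ∈ {c | t + c ≤ m₂} := htτ₁.trans hτ₁
  have hle₁ : g₁ b ≤ g₁ 0 := hanti₁.antitoneOn h0m₁ hbm b.zero_le
  have hle₂ : g₂ a ≤ g₂ 0 := hanti₂.antitoneOn h0m₂ ham a.zero_le
  have hpos₁ : 0 < g₁ b := mul_pos (by positivity) (Nprime_pos hq (by omega))
  have hpos₂ : 0 < g₂ a := mul_pos (by positivity) (Nprime_pos hq (by omega))
  have hge : g₁ 0 * g₂ 0 ≤ g₁ b * g₂ a := by
    simpa only [hg₁, hg₂, pow_zero, one_mul, add_zero, ← heq] using hprod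
  have hmax := (mul_le_mul hle₁ hle₂ hpos₂.le (hpos₁.le.trans hle₁)).antisymm hge
  obtain ⟨hb0, ha0⟩ :=
    (mul_eq_mul_iff_eq_and_eq_of_pos hle₁ hle₂ hpos₁ (hpos₂.trans_le hle₂)).1 hmax
  rw [ha, hb, hanti₂.injOn ham h0m₂ ha0, hanti₁.injOn hbm h0m₁ hb0]
  exact ⟨rfl, rfl⟩

theorem le_of_ncard_eq_Nprime (hf : f.SeparatingLeft) (hV : finrank K V = 2 * ν) {m : ℕ}
    (hm : m ≤ ν) {𝓐 : Set (Submodule K V)} (h𝓐 : 𝓐 ⊆ polar f m) {T G : Submodule K V}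
    (hdim : m + finrank K G + 1 ≤ 2 * ν) (hT : ∀ F ∈ 𝓐, T ≤ F)
    (hG : ∀ F ∈ 𝓐, finrank K T ≤ finrank K ↥(F ⊓ G))
    (hcard : (𝓐.ncard : ℚ) = Nprime (Nat.card K) (finrank K T) m ν) : T ≤ G := by
  have hq : 1 < Nat.card K := Finite.one_lt_card
  obtain ⟨F, hF⟩ : 𝓐.Nonempty := Set.nonempty_of_ncard_ne_zero fun h0 =>
    (Nprime_pos hq hm).ne (by rw [← hcard, h0, Nat.cast_zero])
  have hTm : finrank K T ≤ m := (Submodule.finrank_mono (hT F hF)).trans_eq (h𝓐 hF).2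
  have hTG : finrank K T ≤ finrank K G := (hG F hF).trans (Submodule.finrank_mono inf_le_right)
  rcases hTm.eq_or_lt with hTm | hTm
  · have hTF : T = F := Submodule.eq_of_le_of_finrank_eq (hT F hF) (hTm.trans (h𝓐 hF).2.symm)
    exact le_of_finrank_le_finrank_inf ((hG F hF).trans_eq (by rw [hTF]))
  · by_contra hnot
    have hlt : finrank K ↥(T ⊓ G) < finrank K T := by
      by_contra! hge
      exact hnot (le_of_finrank_le_finrank_inf hge)
    have hbound := ncard_le_pow_mul_of_forall_extension hlt hTG hT hG (Nprime_pos hq hm).le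
      fun S' hS' => ncard_containing_le_Nprime hf hV hm h𝓐 hS' hTm
    exact (hbound.trans_lt (pow_mul_Nprime_succ_lt hq hTm hm (by omega))).ne hcard

end ExtremalFamilies

theorem stmt_1_general {K V : Type*} [Field K] [Finite K] [AddCommGroup V] [Module K V] [Finite V]
    {ν m₁ m₂ t : ℕ} {f : V →ₗ[K] V →ₗ[K] K} (hf : f.SeparatingLeft)
    (hV : finrank K V = 2 * ν) (htm₁ : t ≤ m₁) (htm₂ : t ≤ m₂)
    (hdim₁ : 2 * m₁ + m₂ + 1 ≤ 2 * ν) (hdim₂ : m₁ + 2 * m₂ + 1 ≤ 2 * ν)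
    {ℱ₁ ℱ₂ : Set (Submodule K V)} (h₁ : ℱ₁ ⊆ polar f m₁) (h₂ : ℱ₂ ⊆ polar f m₂)
    (hcross : CrossIntersecting t ℱ₁ ℱ₂)
    (heq : (ℱ₁.ncard : ℚ) * ℱ₂.ncard =
      Nprime (Nat.card K) t m₁ ν * Nprime (Nat.card K) t m₂ ν) :
    ∃ T ∈ polar f t, ℱ₁ = C3 f T m₁ ∧ ℱ₂ = C3 f T m₂ := by
  have hq : 1 < Nat.card K := Finite.one_lt_card
  have hm₁ : m₁ ≤ ν := by omega
  have hm₂ : m₂ ≤ ν := by omega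
  have hN₁ : 0 < Nprime (Nat.card K) t m₁ ν := Nprime_pos hq hm₁
  have hN₂ : 0 < Nprime (Nat.card K) t m₂ ν := Nprime_pos hq hm₂
  have hcards := mul_ne_zero_iff.1 (heq.trans_ne (mul_pos hN₁ hN₂).ne')
  have hne₁ : ℱ₁.Nonempty := Set.nonempty_of_ncard_ne_zero (Nat.cast_ne_zero.1 hcards.1)
  have hne₂ : ℱ₂.Nonempty := Set.nonempty_of_ncard_ne_zero (Nat.cast_ne_zero.1 hcards.2)
  obtain ⟨hτ₁, hτ₂⟩ :=
    tauCover_eq_of_ncard_mul_ncard_eq hf hV hdim₁ hdim₂ h₁ h₂ hcross hne₁ hne₂ heq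
  have hle₁ : (ℱ₁.ncard : ℚ) ≤ Nprime (Nat.card K) t m₁ ν := by
    simpa using ncard_le_of_tauCover_eq (a := 0) (b := 0) hf hV hm₁ h₁ h₂ hcross hne₁ hne₂ hτ₁ hτ₂
  have hle₂ : (ℱ₂.ncard : ℚ) ≤ Nprime (Nat.card K) t m₂ ν := by
    simpa using
      ncard_le_of_tauCover_eq (a := 0) (b := 0) hf hV hm₂ h₂ h₁ hcross.symm hne₂ hne₁ hτ₂ hτ₁
  obtain ⟨hcard₁, hcard₂⟩ := (mul_eq_mul_iff_eq_and_eq_of_pos hle₁ hle₂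
    (hcards.1.lt_of_le' (Nat.cast_nonneg _)) hN₂).1 heq
  obtain ⟨G, hG⟩ := hne₂
  obtain ⟨T, hT, hTτ⟩ := (hcross.isTCover hG (h₂ hG).1).exists_finrank_eq_tauCover
  obtain rfl : finrank K T = t := hTτ.trans hτ₁
  have hT₁ : ∀ F ∈ ℱ₁, T ≤ F := fun F hF => le_of_finrank_le_finrank_inf (hT.2 F hF)
  have hT₂ : ∀ G ∈ ℱ₂, T ≤ G := fun G hG => le_of_ncard_eq_Nprime hf hV hm₁ h₁
    (by rw [(h₂ hG).2]; omega) hT₁ (fun F hF => hcross F hF G hG) hcard₁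
  exact ⟨T, ⟨hT.1, rfl⟩, eq_C3_of_ncard_eq_Nprime hf hV hm₁ h₁ rfl htm₁ hT₁ hcard₁,
    eq_C3_of_ncard_eq_Nprime hf hV hm₂ h₂ rfl htm₂ hT₂ hcard₂⟩

theorem stmt_1
    (q ν m₁ m₂ t : ℕ) (hq : IsPrimePow q)
    {K : Type} [Field K] [Fintype K] (hK : Fintype.card K = q)
    (f : (Fin (2 * ν) → K) →ₗ[K] (Fin (2 * ν) → K) →ₗ[K] K)
    (halt : ∀ x, f x x = 0)
    (hnd : ∀ x, (∀ y, f x y = 0) → x = 0)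
    (hν : 0 < ν) (hm₂ : 0 < m₂) (ht : 0 < t)
    (hm : m₂ ≤ m₁) (hmt : t ≤ m₂) (hdim : 2 * m₁ + m₂ + 1 ≤ 2 * ν)
    (ℱ₁ ℱ₂ : Set (Submodule K (Fin (2 * ν) → K)))
    (h1 : ℱ₁ ⊆ polar f m₁) (h2 : ℱ₂ ⊆ polar f m₂)
    (hcross : ∀ F₁ ∈ ℱ₁, ∀ F₂ ∈ ℱ₂, t ≤ finrank K ↥(F₁ ⊓ F₂))
    (heq : (ℱ₁.ncard : ℚ) * ℱ₂.ncard = Nprime q t m₁ ν * Nprime q t m₂ ν) :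
    ∃ T ∈ polar f t,
      ℱ₁ = {F | F ∈ polar f m₁ ∧ T ≤ F} ∧ ℱ₂ = {F | F ∈ polar f m₂ ∧ T ≤ F} := by
  rw [← hK, ← Nat.card_eq_fintype_card] at heq
  exact stmt_1_general hnd (by simp) (hmt.trans hm) hmt hdim (by omega) h1 h2 hcross heq

end
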